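/- Let W ∈ ℝ^{d×d} be invertible with condition number κ(W) = σ_max(W)/σ_min(W), and let x, y ∈ ℝ^d be row vectors with ‖x‖₂ = ‖y‖₂ = √d. Let τ ∈ [0, 2) and suppose the cosine similarity of xW and yW satisfies ⟨xW, yW⟩ ≥ (1 − τ) ‖xW‖₂ ‖yW‖₂. Then ‖x − y‖₂² ≤ 4 d τ κ(W)² / (2 + τ (κ(W)² − 1)). -/

import Mathlib

/-!
Write `X = xW`, `Y = yW`, `a = ‖X‖`, `b = ‖Y‖`, `α = ⟨X, Y⟩`, `g = ⟨x, y⟩`, `M = ‖W‖`, `N = ‖W⁻¹‖`.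
The half-angle distortion bound comes from two norm estimates.

* `2(ab + α) ≤ ‖X + Y‖² ≤ M² ‖x + y‖² = 2 M² (d + g)`.
* `2ab(d - g) ≤ ‖b x - a y‖² ≤ N² ‖b X - a Y‖² = 2ab N² (ab - α)`, hence `d - g ≤ N² (ab - α)`.

The cosine hypothesis `α ≥ (1 - τ)ab` is equivalent to `(2 - τ)(ab - α) ≤ τ(ab + α)`. Chaining the
three gives `(2 - τ)(d - g) ≤ τ κ² (d + g)`, which rearranges to the claim because
`‖x - y‖² = 2(d - g)`.
-/

open scoped BigOperators
open Matrix

/-- Softmax of a vector. -/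
noncomputable def softmax {n : ℕ} (z : Fin n → ℝ) : Fin n → ℝ :=
  fun j => Real.exp (z j) / ∑ k, Real.exp (z k)

/-- ℓ¹ norm. -/
noncomputable def l1 {n : ℕ} (v : Fin n → ℝ) : ℝ := ∑ j, |v j|

/-- ℓ² (Euclidean) norm. -/
noncomputable def l2 {n : ℕ} (v : Fin n → ℝ) : ℝ := Real.sqrt (∑ j, v j ^ 2)

/-- ℓ^∞ norm. -/
noncomputable def linf {n : ℕ} (v : Fin n → ℝ) : ℝ := ⨆ j, |v j|

/-- Spectral norm (operator ℓ²→ℓ² norm) of a matrix acting on row vectors. -/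
noncomputable def spec {m n : ℕ} (W : Matrix (Fin m) (Fin n) ℝ) : ℝ :=
  sSup {c | ∃ x : Fin m → ℝ, l2 x ≤ 1 ∧ c = l2 (x ᵥ* W)}

/-- Frobenius norm of a matrix. -/
noncomputable def frob {m n : ℕ} (W : Matrix (Fin m) (Fin n) ℝ) : ℝ :=
  Real.sqrt (∑ i, ∑ j, W i j ^ 2)

/-- Operator norm of `h ↦ h Eᵀ` from ℓ² to ℓ¹. -/
noncomputable def opNorm21 {m d : ℕ} (E : Matrix (Fin m) (Fin d) ℝ) : ℝ :=
  sSup {c | ∃ h : Fin d → ℝ, l2 h ≤ 1 ∧ c = l1 (h ᵥ* Eᵀ)}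

/-- Operator norm of `h ↦ h Eᵀ` from ℓ² to ℓ^∞. -/
noncomputable def opNorm2inf {m d : ℕ} (E : Matrix (Fin m) (Fin d) ℝ) : ℝ :=
  sSup {c | ∃ h : Fin d → ℝ, l2 h ≤ 1 ∧ c = linf (h ᵥ* Eᵀ)}

/-- Condition number `κ(W) = σ_max(W)/σ_min(W)` of an invertible matrix,
expressed as `σ_max(W) · σ_max(W⁻¹)`. -/
noncomputable def condNum {d : ℕ} (W : Matrix (Fin d) (Fin d) ℝ) : ℝ := spec W * spec W⁻¹

lemma l2_nonneg {n : ℕ} (v : Fin n → ℝ) : 0 ≤ l2 v := Real.sqrt_nonneg _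

lemma l2_sq {n : ℕ} (v : Fin n → ℝ) : l2 v ^ 2 = ∑ j, v j ^ 2 :=
  Real.sq_sqrt (Finset.sum_nonneg fun _ _ => sq_nonneg _)

lemma l2_smul {n : ℕ} (c : ℝ) (hc : 0 ≤ c) (v : Fin n → ℝ) : l2 (c • v) = c * l2 v := by
  have h : l2 (c • v) ^ 2 = (c * l2 v) ^ 2 := by
    rw [mul_pow, l2_sq, l2_sq, Finset.mul_sum]
    exact Finset.sum_congr rfl fun j _ => by simp [mul_pow]
  exact (sq_eq_sq₀ (l2_nonneg _) (mul_nonneg hc (l2_nonneg _))).1 h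

/-- Expansion of the squared norm of a linear combination of two vectors. -/
lemma l2_comb_sq {n : ℕ} (s t : ℝ) (u v : Fin n → ℝ) :
    l2 (s • u + t • v) ^ 2 = s ^ 2 * l2 u ^ 2 + t ^ 2 * l2 v ^ 2 + 2 * s * t * ∑ j, u j * v j := by
  simp only [l2_sq, Finset.mul_sum, ← Finset.sum_add_distrib]
  refine Finset.sum_congr rfl fun j _ => ?_
  simp only [Pi.add_apply, Pi.smul_apply, smul_eq_mul]
  ring

lemma l2_vecMul_le_frob {m n : ℕ} (W : Matrix (Fin m) (Fin n) ℝ) (v : Fin m → ℝ) :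
    l2 (v ᵥ* W) ≤ l2 v * frob W := by
  have hf : frob W ^ 2 = ∑ i, ∑ j, W i j ^ 2 :=
    Real.sq_sqrt (Finset.sum_nonneg fun _ _ => Finset.sum_nonneg fun _ _ => sq_nonneg _)
  have h : l2 (v ᵥ* W) ^ 2 ≤ (l2 v * frob W) ^ 2 := by
    rw [mul_pow, l2_sq, l2_sq, hf, Finset.sum_comm, Finset.mul_sum]
    refine Finset.sum_le_sum fun j _ => ?_
    simpa [Matrix.vecMul, dotProduct] using
      Finset.sum_mul_sq_le_sq_mul_sq Finset.univ v (fun i => W i j)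
  exact (sq_le_sq₀ (l2_nonneg _) (mul_nonneg (l2_nonneg _) (Real.sqrt_nonneg _))).1 h

/-- The supremum defining `spec W` is over a set bounded by the Frobenius norm, so it is a genuine
operator-norm bound. -/
lemma l2_vecMul_le_spec {m n : ℕ} (W : Matrix (Fin m) (Fin n) ℝ) (v : Fin m → ℝ) :
    l2 (v ᵥ* W) ≤ spec W * l2 v := by
  rcases (l2_nonneg v).eq_or_lt with h0 | hpos
  · simpa [← h0] using l2_vecMul_le_frob W v
  · have hbdd : BddAbove {c | ∃ x : Fin m → ℝ, l2 x ≤ 1 ∧ c = l2 (x ᵥ* W)} := by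
      refine ⟨frob W, ?_⟩
      rintro c ⟨x, hx, rfl⟩
      exact (l2_vecMul_le_frob W x).trans (mul_le_of_le_one_left (Real.sqrt_nonneg _) hx)
    have hc : 0 ≤ (l2 v)⁻¹ := inv_nonneg.2 hpos.le
    have h : (l2 v)⁻¹ * l2 (v ᵥ* W) ≤ spec W := by
      refine le_csSup hbdd ⟨(l2 v)⁻¹ • v, ?_, ?_⟩
      · rw [l2_smul _ hc, inv_mul_cancel₀ hpos.ne']
      · rw [Matrix.smul_vecMul, l2_smul _ hc]
    rwa [inv_mul_le_iff₀ hpos, mul_comm] at h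

lemma l2_le_spec_inv {d : ℕ} (W : Matrix (Fin d) (Fin d) ℝ) (hW : IsUnit W.det)
    (v : Fin d → ℝ) : l2 v ≤ spec W⁻¹ * l2 (v ᵥ* W) := by
  simpa [Matrix.vecMul_vecMul, Matrix.mul_nonsing_inv W hW] using
    l2_vecMul_le_spec W⁻¹ (v ᵥ* W)

/-- If `W` is invertible with condition number `κ(W)`, `x, y` are row
vectors with `‖x‖₂ = ‖y‖₂ = √d`, `τ ∈ [0,2)`, and the cosine similarity of `xW` and
`yW` satisfies `⟨xW, yW⟩ ≥ (1−τ)‖xW‖₂‖yW‖₂`, then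
`‖x − y‖₂² ≤ 4dτκ(W)²/(2 + τ(κ(W)² − 1))`. -/
theorem cosine_similarity_distance_bound {d : ℕ}
    (W : Matrix (Fin d) (Fin d) ℝ) (hW : IsUnit W.det)
    (x y : Fin d → ℝ) (hx : l2 x = Real.sqrt d) (hy : l2 y = Real.sqrt d)
    (τ : ℝ) (hτ0 : 0 ≤ τ) (hτ2 : τ < 2)
    (hcos : (∑ j, (x ᵥ* W) j * (y ᵥ* W) j)
              ≥ (1 - τ) * l2 (x ᵥ* W) * l2 (y ᵥ* W)) :
    l2 (fun k => x k - y k) ^ 2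
      ≤ 4 * d * τ * condNum W ^ 2 / (2 + τ * (condNum W ^ 2 - 1)) := by
  rcases Nat.eq_zero_or_pos d with rfl | hd
  · simp [l2]
  have hdR : (0 : ℝ) < d := by exact_mod_cast hd
  have hx2 : l2 x ^ 2 = d := by rw [hx, Real.sq_sqrt hdR.le]
  have hy2 : l2 y ^ 2 = d := by rw [hy, Real.sq_sqrt hdR.le]
  have hcomb : ∀ s t : ℝ, (s • x + t • y) ᵥ* W = s • (x ᵥ* W) + t • (y ᵥ* W) := fun s t => by
    rw [Matrix.add_vecMul, Matrix.smul_vecMul, Matrix.smul_vecMul]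
  have hpos : ∀ v : Fin d → ℝ, l2 v = Real.sqrt d → 0 < l2 (v ᵥ* W) := fun v hv => by
    refine (l2_nonneg _).lt_of_ne fun h0 => ?_
    have h := l2_le_spec_inv W hW v
    rw [← h0, mul_zero, hv] at h
    exact absurd h (not_le.2 (Real.sqrt_pos.2 hdR))
  have ha := hpos x hx
  have hb := hpos y hy
  have hM : l2 ((1 : ℝ) • (x ᵥ* W) + (1 : ℝ) • (y ᵥ* W)) ^ 2
      ≤ spec W ^ 2 * l2 ((1 : ℝ) • x + (1 : ℝ) • y) ^ 2 := by
    rw [← hcomb, ← mul_pow]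
    exact pow_le_pow_left₀ (l2_nonneg _) (l2_vecMul_le_spec W _) 2
  have hN : l2 (l2 (y ᵥ* W) • x + (-l2 (x ᵥ* W)) • y) ^ 2
      ≤ spec W⁻¹ ^ 2 *
        l2 (l2 (y ᵥ* W) • (x ᵥ* W) + (-l2 (x ᵥ* W)) • (y ᵥ* W)) ^ 2 := by
    rw [← hcomb, ← mul_pow]
    exact pow_le_pow_left₀ (l2_nonneg _) (l2_le_spec_inv W hW _) 2
  have hdiff : l2 (fun k => x k - y k) ^ 2 = 2 * (d - ∑ j, x j * y j) := by
    have h := l2_comb_sq 1 (-1) x y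
    rw [hx2, hy2] at h
    have hfun : (fun k => x k - y k) = (1 : ℝ) • x + (-1 : ℝ) • y := by
      funext k
      simp [sub_eq_add_neg]
    rw [hfun, h]
    ring
  rw [l2_comb_sq, l2_comb_sq, hx2, hy2] at hM hN
  rw [hdiff]
  unfold condNum
  generalize l2 (x ᵥ* W) = a at *
  generalize l2 (y ᵥ* W) = b at *
  generalize (∑ j, (x ᵥ* W) j * (y ᵥ* W) j) = α at *
  generalize (∑ j, x j * y j) = g at *
  generalize spec W = M at *
  generalize spec W⁻¹ = N at *
  have hab : 0 < a * b := mul_pos ha hb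
  have hplus : a * b + α ≤ M ^ 2 * (d + g) := by nlinarith [sq_nonneg (a - b)]
  have hminus : d - g ≤ N ^ 2 * (a * b - α) := by
    refine le_of_mul_le_mul_left ?_ hab
    nlinarith [mul_nonneg hdR.le (sq_nonneg (a - b))]
  have hangle : (2 - τ) * (a * b - α) ≤ τ * (a * b + α) := by linarith
  have hkey : (2 - τ) * (d - g) ≤ τ * (M * N) ^ 2 * (d + g) :=
    calc (2 - τ) * (d - g) ≤ (2 - τ) * (N ^ 2 * (a * b - α)) :=
          mul_le_mul_of_nonneg_left hminus (by linarith)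
      _ = N ^ 2 * ((2 - τ) * (a * b - α)) := by ring
      _ ≤ N ^ 2 * (τ * (a * b + α)) := mul_le_mul_of_nonneg_left hangle (sq_nonneg _)
      _ ≤ N ^ 2 * (τ * (M ^ 2 * (d + g))) := by gcongr
      _ = τ * (M * N) ^ 2 * (d + g) := by ring
  have hden : 0 < 2 + τ * ((M * N) ^ 2 - 1) := by
    nlinarith [mul_nonneg hτ0 (sq_nonneg (M * N))]
  rw [le_div_iff₀ hden]
  linarith
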